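/- Let K < 0, let x_1, …, x_n be points of ℍ^d_K, and let α_1, …, α_n ≥ 0 with ∑_{i=1}^n α_i = 1. Set v = ∑_{i=1}^n α_i x_i. Then K·⟨v,v⟩_L ≥ 1 (in particular ⟨v,v⟩_L < 0 and v_0 > 0), with equality if and only if all x_i with α_i > 0 coincide. -/

import Mathlib

/-!
Expanding bilinearly, `K⟨v,v⟩ - (∑ αᵢ)² = ∑ᵢ ∑ⱼ αᵢ αⱼ (K⟨xᵢ,xⱼ⟩ - 1)`, so everything reduces to
the reversed Cauchy–Schwarz inequality `K⟨x,y⟩ ≥ 1` on the hyperboloid, with equality iff `x = y`.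
That inequality comes from the vector `z = y₀ x - x₀ y`: its time coordinate vanishes, so `⟨z,z⟩`
is a Euclidean square norm, and `2 x₀ y₀ (K⟨x,y⟩ - 1) = (x₀ - y₀)² - K⟨z,z⟩`.
-/

noncomputable section

/-- Lorentzian inner product on ℝ^{d+1}: ⟨x,y⟩_L = −x₀y₀ + ∑_{i=1}^d xᵢyᵢ. -/
def lorentzInner {d : ℕ} (x y : Fin (d + 1) → ℝ) : ℝ :=
  (∑ i, x i * y i) - 2 * x 0 * y 0

/-- Membership in the Lorentz model ℍ^d_K: ⟨x,x⟩_L = 1/K and x₀ > 0. -/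
def onHyperboloid {d : ℕ} (K : ℝ) (x : Fin (d + 1) → ℝ) : Prop :=
  lorentzInner x x = 1 / K ∧ 0 < x 0

section WeightedSums

variable {ι R M : Type*} {s : Finset ι} {w : ι → R}

lemma sum_mul_pos_of_sum_pos [Semiring R] [LinearOrder R] [IsStrictOrderedRing R] {f : ι → R}
    (hw : ∀ i ∈ s, 0 ≤ w i) (hpos : 0 < ∑ i ∈ s, w i) (hf : ∀ i ∈ s, 0 < f i) :
    0 < ∑ i ∈ s, w i * f i := by
  obtain ⟨i, his, hi⟩ : ∃ i ∈ s, 0 < w i := Finset.exists_lt_of_sum_lt (by simpa using hpos)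
  exact Finset.sum_pos' (fun j hj => mul_nonneg (hw j hj) (hf j hj).le)
    ⟨i, his, mul_pos hi (hf i his)⟩

lemma bilinForm_sum_smul_sub [CommRing R] [AddCommGroup M] [Module R M]
    (B : LinearMap.BilinForm R M) (s : Finset ι) (w : ι → R) (x : ι → M) (c : R) :
    B (∑ i ∈ s, w i • x i) (∑ i ∈ s, w i • x i) - c * (∑ i ∈ s, w i) ^ 2 =
      ∑ i ∈ s, ∑ j ∈ s, w i * w j * (B (x i) (x j) - c) := by
  have hform : B (∑ i ∈ s, w i • x i) (∑ i ∈ s, w i • x i) =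
      ∑ i ∈ s, ∑ j ∈ s, w i * w j * B (x i) (x j) := by
    rw [LinearMap.BilinForm.sum_left]
    simp only [LinearMap.BilinForm.sum_right, map_smul, LinearMap.smul_apply, smul_eq_mul,
      Finset.mul_sum, mul_assoc]
  have hconst : c * (∑ i ∈ s, w i) ^ 2 = ∑ i ∈ s, ∑ j ∈ s, w i * w j * c := by
    rw [mul_comm, sq, Finset.sum_mul_sum]
    simp only [Finset.sum_mul]
  simp only [hform, hconst, mul_sub, Finset.sum_sub_distrib]

variable [CommRing R] [PartialOrder R] [IsOrderedRing R] [AddCommGroup M] [Module R M]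
  {B : LinearMap.BilinForm R M} {x : ι → M} {c : R}

lemma mul_sq_sum_le_bilinForm_sum_smul (hw : ∀ i ∈ s, 0 ≤ w i)
    (hB : ∀ i ∈ s, ∀ j ∈ s, c ≤ B (x i) (x j)) :
    c * (∑ i ∈ s, w i) ^ 2 ≤ B (∑ i ∈ s, w i • x i) (∑ i ∈ s, w i • x i) := by
  rw [← sub_nonneg, bilinForm_sum_smul_sub]
  exact Finset.sum_nonneg fun i hi => Finset.sum_nonneg fun j hj =>
    mul_nonneg (mul_nonneg (hw i hi) (hw j hj)) (sub_nonneg.2 (hB i hi j hj))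

lemma bilinForm_sum_smul_eq_iff [NoZeroDivisors R] (hw : ∀ i ∈ s, 0 ≤ w i)
    (hB : ∀ i ∈ s, ∀ j ∈ s, c ≤ B (x i) (x j)) :
    B (∑ i ∈ s, w i • x i) (∑ i ∈ s, w i • x i) = c * (∑ i ∈ s, w i) ^ 2 ↔
      ∀ i ∈ s, ∀ j ∈ s, 0 < w i → 0 < w j → B (x i) (x j) = c := by
  have hterm : ∀ i ∈ s, ∀ j ∈ s, 0 ≤ w i * w j * (B (x i) (x j) - c) := fun i hi j hj =>
    mul_nonneg (mul_nonneg (hw i hi) (hw j hj)) (sub_nonneg.2 (hB i hi j hj))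
  rw [← sub_eq_zero, bilinForm_sum_smul_sub,
    Finset.sum_eq_zero_iff_of_nonneg fun i hi => Finset.sum_nonneg (hterm i hi)]
  refine forall₂_congr fun i hi => ?_
  rw [Finset.sum_eq_zero_iff_of_nonneg (hterm i hi)]
  refine forall₂_congr fun j hj => ?_
  rw [mul_eq_zero, mul_eq_zero, sub_eq_zero, (hw i hi).lt_iff_ne', (hw j hj).lt_iff_ne']
  tauto

end WeightedSums

section LorentzInner

variable {d : ℕ}

lemma lorentzInner_eq_dotProduct_sub (x y : Fin (d + 1) → ℝ) :
    lorentzInner x y = x ⬝ᵥ y - 2 * x 0 * y 0 :=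
  rfl

lemma lorentzInner_comm (x y : Fin (d + 1) → ℝ) : lorentzInner x y = lorentzInner y x := by
  rw [lorentzInner_eq_dotProduct_sub, lorentzInner_eq_dotProduct_sub, dotProduct_comm,
    mul_right_comm]

/-- The Lorentzian inner product `lorentzInner`, bundled as a bilinear form on `ℝ^{d+1}`, so that
results on general bilinear forms apply to it. -/
def lorentzForm (d : ℕ) : LinearMap.BilinForm ℝ (Fin (d + 1) → ℝ) :=
  LinearMap.mk₂ ℝ lorentzInner
    (fun x y z => by
      simp only [lorentzInner_eq_dotProduct_sub, add_dotProduct, Pi.add_apply]; ring)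
    (fun a x y => by
      simp only [lorentzInner_eq_dotProduct_sub, smul_dotProduct, Pi.smul_apply, smul_eq_mul]; ring)
    (fun x y z => by
      simp only [lorentzInner_eq_dotProduct_sub, dotProduct_add, Pi.add_apply]; ring)
    (fun a x y => by
      simp only [lorentzInner_eq_dotProduct_sub, dotProduct_smul, Pi.smul_apply, smul_eq_mul]; ring)

lemma lorentzForm_apply (x y : Fin (d + 1) → ℝ) : lorentzForm d x y = lorentzInner x y :=
  rfl

lemma lorentzInner_smul_sub_smul_self (a b : ℝ) (x y : Fin (d + 1) → ℝ) :
    lorentzInner (a • x - b • y) (a • x - b • y) =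
      a ^ 2 * lorentzInner x x - 2 * a * b * lorentzInner x y + b ^ 2 * lorentzInner y y := by
  simp only [← lorentzForm_apply, map_sub, map_smul, LinearMap.sub_apply, LinearMap.smul_apply,
    smul_eq_mul]
  simp only [lorentzForm_apply, lorentzInner_comm y x]
  ring

lemma lorentzInner_self_eq_dotProduct {z : Fin (d + 1) → ℝ} (hz : z 0 = 0) :
    lorentzInner z z = z ⬝ᵥ z := by
  rw [lorentzInner_eq_dotProduct_sub, hz, mul_zero, sub_zero]

lemma lorentzInner_self_nonneg {z : Fin (d + 1) → ℝ} (hz : z 0 = 0) : 0 ≤ lorentzInner z z := by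
  rw [lorentzInner_self_eq_dotProduct hz]
  exact Finset.sum_nonneg fun i _ => mul_self_nonneg (z i)

lemma lorentzInner_self_eq_zero {z : Fin (d + 1) → ℝ} (hz : z 0 = 0) :
    lorentzInner z z = 0 ↔ z = 0 := by
  rw [lorentzInner_self_eq_dotProduct hz, dotProduct_self_eq_zero]

lemma smul_sub_smul_apply_zero (x y : Fin (d + 1) → ℝ) : (y 0 • x - x 0 • y) 0 = 0 := by
  simp only [Pi.sub_apply, Pi.smul_apply, smul_eq_mul, mul_comm, sub_self]

end LorentzInner

namespace onHyperboloid

variable {d : ℕ} {K : ℝ} {x y : Fin (d + 1) → ℝ}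

lemma mul_lorentzInner_self (hK : K ≠ 0) (hx : onHyperboloid K x) : K * lorentzInner x x = 1 := by
  rw [hx.1, mul_one_div_cancel hK]

lemma two_mul_mul_lorentzInner_sub_one (hK : K ≠ 0) (hx : onHyperboloid K x)
    (hy : onHyperboloid K y) :
    2 * x 0 * y 0 * (K * lorentzInner x y - 1) =
      (x 0 - y 0) ^ 2 + -K * lorentzInner (y 0 • x - x 0 • y) (y 0 • x - x 0 • y) := by
  rw [lorentzInner_smul_sub_smul_self]
  linear_combination
    y 0 ^ 2 * hx.mul_lorentzInner_self hK + x 0 ^ 2 * hy.mul_lorentzInner_self hK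

lemma one_le_mul_lorentzInner (hK : K < 0) (hx : onHyperboloid K x) (hy : onHyperboloid K y) :
    1 ≤ K * lorentzInner x y := by
  have hgap : 0 ≤ 2 * x 0 * y 0 * (K * lorentzInner x y - 1) := by
    rw [hx.two_mul_mul_lorentzInner_sub_one hK.ne hy]
    exact add_nonneg (sq_nonneg _) (mul_nonneg (neg_nonneg.2 hK.le)
      (lorentzInner_self_nonneg (smul_sub_smul_apply_zero x y)))
  have hpos : 0 < 2 * x 0 * y 0 := mul_pos (mul_pos two_pos hx.2) hy.2
  exact sub_nonneg.1 (nonneg_of_mul_nonneg_right hgap hpos)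

lemma mul_lorentzInner_eq_one_iff (hK : K < 0) (hx : onHyperboloid K x)
    (hy : onHyperboloid K y) : K * lorentzInner x y = 1 ↔ x = y := by
  refine ⟨fun h => ?_, fun h => h ▸ hx.mul_lorentzInner_self hK.ne⟩
  have hz := smul_sub_smul_apply_zero x y
  have hgap := hx.two_mul_mul_lorentzInner_sub_one hK.ne hy
  rw [h, sub_self, mul_zero, eq_comm, add_eq_zero_iff_of_nonneg (sq_nonneg _)
    (mul_nonneg (neg_nonneg.2 hK.le) (lorentzInner_self_nonneg hz)), sq_eq_zero_iff, sub_eq_zero,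
    mul_eq_zero_iff_left (neg_ne_zero.2 hK.ne), lorentzInner_self_eq_zero hz, sub_eq_zero] at hgap
  obtain ⟨htime, hparallel⟩ := hgap
  rw [← htime] at hparallel
  exact smul_right_injective _ hx.2.ne' hparallel

end onHyperboloid

theorem convex_combination_bound_general {ι : Type*} {s : Finset ι} {d : ℕ} {K : ℝ} (hK : K < 0)
    {x : ι → Fin (d + 1) → ℝ} (hx : ∀ i ∈ s, onHyperboloid K (x i))
    {α : ι → ℝ} (hα : ∀ i ∈ s, 0 ≤ α i) (hpos : 0 < ∑ i ∈ s, α i) :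
    (∑ i ∈ s, α i) ^ 2 ≤ K * lorentzInner (∑ i ∈ s, α i • x i) (∑ i ∈ s, α i • x i) ∧
    lorentzInner (∑ i ∈ s, α i • x i) (∑ i ∈ s, α i • x i) < 0 ∧
    0 < (∑ i ∈ s, α i • x i) 0 ∧
    (K * lorentzInner (∑ i ∈ s, α i • x i) (∑ i ∈ s, α i • x i) = (∑ i ∈ s, α i) ^ 2 ↔
      ∀ i ∈ s, ∀ j ∈ s, 0 < α i → 0 < α j → x i = x j) := by
  have hpair : ∀ i ∈ s, ∀ j ∈ s, 1 ≤ (K • lorentzForm d) (x i) (x j) := fun i hi j hj =>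
    (hx i hi).one_le_mul_lorentzInner hK (hx j hj)
  have hbound : (∑ i ∈ s, α i) ^ 2 ≤
      K * lorentzInner (∑ i ∈ s, α i • x i) (∑ i ∈ s, α i • x i) := by
    rw [← one_mul ((∑ i ∈ s, α i) ^ 2)]
    exact mul_sq_sum_le_bilinForm_sum_smul hα hpair
  refine ⟨hbound, neg_of_mul_pos_right ((pow_pos hpos 2).trans_le hbound) hK.le, ?_, ?_⟩
  · rw [Finset.sum_apply]
    exact sum_mul_pos_of_sum_pos hα hpos fun i hi => (hx i hi).2
  · rw [← one_mul ((∑ i ∈ s, α i) ^ 2)]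
    refine (bilinForm_sum_smul_eq_iff hα hpair).trans (forall₄_congr fun i hi j hj => ?_)
    exact imp_congr_right fun _ => imp_congr_right fun _ =>
      (hx i hi).mul_lorentzInner_eq_one_iff hK (hx j hj)

/-- A convex combination v of hyperboloid points satisfies K·⟨v,v⟩_L ≥ 1
(in particular ⟨v,v⟩_L < 0 and v₀ > 0), with equality iff all points with
positive coefficient coincide. -/
theorem convex_combination_bound {d n : ℕ} {K : ℝ} (hK : K < 0)
    {x : Fin n → Fin (d + 1) → ℝ} (hx : ∀ i, onHyperboloid K (x i))
    {α : Fin n → ℝ} (hα : ∀ i, 0 ≤ α i) (hsum : ∑ i, α i = 1) :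
    1 ≤ K * lorentzInner (∑ i, α i • x i) (∑ i, α i • x i) ∧
    lorentzInner (∑ i, α i • x i) (∑ i, α i • x i) < 0 ∧
    0 < (∑ i, α i • x i) 0 ∧
    (K * lorentzInner (∑ i, α i • x i) (∑ i, α i • x i) = 1 ↔
      ∀ i j, 0 < α i → 0 < α j → x i = x j) := by
  simpa only [hsum, one_pow, Finset.mem_univ, forall_const] using
    convex_combination_bound_general (s := Finset.univ) hK (fun i _ => hx i) (fun i _ => hα i)
      (hsum ▸ one_pos)
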